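/- Let A be an Artin algebra that is n-syzygy finite and satisfies ed(A) = n. Then ed Ω^i(A-mod) = n − i for each 0 ≤ i ≤ n. -/

import Mathlib

/-!
The whole statement follows from the inequality `ed Ωⁱ(A-mod) ≤ ed Ωⁱ⁺¹(A-mod) + 1`
(`ed_syzCat_le`). Iterated `n - i` times from `ed Ωⁿ(A-mod) = 0` it gives
`ed Ωⁱ(A-mod) ≤ n - i`; iterated `i` times from `ed(A) = n` it gives `n ≤ ed Ωⁱ(A-mod) + i`.

For the inequality, let `X ∈ Ωⁱ(A-mod)` and take `0 → K → P → X → 0` with `P` free of finite rank,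
so that `K ∈ Ωⁱ⁺¹(A-mod) ⊆ [T]_{m+1}`. If `0 → K → I → L → 0` is exact with `I` injective, then
the pushout of `K → P` and `K → I` is `I ⊕ X`, because `I` is injective, and it is an extension of
`L` by `P` (`mem_bracket_of_cosyzygy`). It remains to bound `L` uniformly: fix one embedding of `T`
in a finitely generated injective module `I₀` with cokernel `L₀`, and put `U = A ⊕ I₀ ⊕ L₀`. The
horseshoe lemma (`HasCosyzygy.extension`), together with stability under summands
(`HasCosyzygy.summand`), shows that `I` can be chosen in `add U` with `L ∈ [U]_{m+1}`
(`hasCosyzygy_bracket`). Hence `X ∈ [U]_{m+2}`.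

The Artin algebra hypothesis provides `I₀` (`exists_finite_injective`): if `E` is an injective hull
of a finitely generated module `M`, a homomorphism from a simple module to `E` lands in `M`, so by
induction on the length `Hom_A(N, E)` is a Noetherian `R`-module for every `N` of finite length; the
case `N = A` shows that `E` itself is finitely generated.
-/

open CategoryTheory

universe u

namespace Paper

variable (A : Type u) [Ring A]

/-- A short exact sequence `0 → X → Y → Z → 0` of `A`-modules. -/
def SES (X Y Z : ModuleCat.{u} A) : Prop :=
  ∃ (f : X →ₗ[A] Y) (g : Y →ₗ[A] Z),
    Function.Injective f ∧ Function.Surjective g ∧ LinearMap.range f = LinearMap.ker g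

/-- `M` is a direct summand of `X`. -/
def IsSummand (M X : ModuleCat.{u} A) : Prop :=
  ∃ (i : M →ₗ[A] X) (r : X →ₗ[A] M), r.comp i = LinearMap.id

/-- The additive closure `add 𝒯`: direct summands of finite direct sums of objects of `𝒯`. -/
def addClosure (T : Set (ModuleCat.{u} A)) : Set (ModuleCat.{u} A) :=
  { M | ∃ (n : ℕ) (f : Fin n → ModuleCat.{u} A), (∀ j, f j ∈ T) ∧
      IsSummand A M (ModuleCat.of A (∀ j, (f j : Type u))) }

/-- The extension product `𝒞 • 𝒟`: (summands of) extensions of a module of `𝒟`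
by a module of `𝒞`. -/
def bullet (C D : Set (ModuleCat.{u} A)) : Set (ModuleCat.{u} A) :=
  addClosure A { X | ∃ C' ∈ C, ∃ D' ∈ D, SES A C' X D' }

/-- `[𝒯]ₙ`, defined by `[𝒯]₀ = {0}`, `[𝒯]₁ = add 𝒯` and `[𝒯]ₙ = [𝒯]₁ • [𝒯]ₙ₋₁`. -/
def bracket (T : Set (ModuleCat.{u} A)) : ℕ → Set (ModuleCat.{u} A)
  | 0 => { M | ∀ x : M, x = 0 }
  | 1 => addClosure A T
  | n + 2 => bullet A (addClosure A T) (bracket T (n + 1))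

/-- The class `𝒯₁ ⊕ 𝒯₂ = {X ⊕ Y | X ∈ 𝒯₁, Y ∈ 𝒯₂}`. -/
def setSum (T1 T2 : Set (ModuleCat.{u} A)) : Set (ModuleCat.{u} A) :=
  { M | ∃ X ∈ T1, ∃ Y ∈ T2, Nonempty ((M : Type u) ≃ₗ[A] (↥X × ↥Y)) }

/-- The extension dimension of a subcategory `𝒞` of `A`-mod:
the least `n` such that `𝒞 ⊆ [T]_{n+1}` for some finitely generated module `T`. -/
noncomputable def ed (C : Set (ModuleCat.{u} A)) : ℕ∞ :=
  sInf { n : ℕ∞ | ∃ m : ℕ, n = (m : ℕ∞) ∧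
    ∃ T : ModuleCat.{u} A, Module.Finite A T ∧ C ⊆ bracket A {T} (m + 1) }

/-- The category `Ωⁿ(A-mod)` of `n`-th syzygy modules: finitely generated `K` admitting
an exact sequence `0 → K → P⁰ → ⋯ → P^{n-1} → M → 0` with all `Pⁱ` projective,
encoded by a chain of short exact sequences. -/
def SyzCat (n : ℕ) : Set (ModuleCat.{u} A) :=
  { K | Module.Finite A K ∧
    ∃ (Ks : Fin (n + 1) → ModuleCat.{u} A) (P : Fin n → ModuleCat.{u} A),
      Ks 0 = K ∧ (∀ i, Module.Finite A (Ks i)) ∧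
      (∀ i, Module.Finite A (P i) ∧ Module.Projective A (P i)) ∧
      ∀ i : Fin n, SES A (Ks i.castSucc) (P i) (Ks i.succ) }

/-- The category `Ω^∞(A-mod)` of infinite syzygy modules: finitely generated `K` admitting
an exact sequence `0 → K → P⁰ → P¹ → ⋯` with all `Pⁱ` projective. -/
def InfSyzCat : Set (ModuleCat.{u} A) :=
  { K | Module.Finite A K ∧
    ∃ Ks P : ℕ → ModuleCat.{u} A,
      Ks 0 = K ∧ (∀ i, Module.Finite A (Ks i)) ∧
      (∀ i, Module.Finite A (P i) ∧ Module.Projective A (P i)) ∧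
      ∀ i : ℕ, SES A (Ks i) (P i) (Ks (i + 1)) }

/-- A submodule is superfluous (small). -/
def Superfluous {M : ModuleCat.{u} A} (N : Submodule A M) : Prop :=
  ∀ N' : Submodule A M, N ⊔ N' = ⊤ → N' = ⊤

/-- `K` is the (minimal) syzygy `Ω(M)`: the kernel of a projective cover `P → M`. -/
def IsSyzygyOf (K M : ModuleCat.{u} A) : Prop :=
  ∃ (P : ModuleCat.{u} A) (i : K →ₗ[A] P) (p : P →ₗ[A] M),
    Module.Projective A P ∧ Function.Injective i ∧ Function.Surjective p ∧
    LinearMap.range i = LinearMap.ker p ∧ Superfluous A (LinearMap.ker p)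

/-- `K ≅ Ωⁿ(M)`. -/
def IsIterSyzygyOf : ℕ → ModuleCat.{u} A → ModuleCat.{u} A → Prop
  | 0, K, M => Nonempty ((K : Type u) ≃ₗ[A] M)
  | n + 1, K, M => ∃ L, IsIterSyzygyOf n L M ∧ IsSyzygyOf A K L

/-- A submodule is essential. -/
def EssentialIn {M : ModuleCat.{u} A} (N : Submodule A M) : Prop :=
  ∀ N' : Submodule A M, N ⊓ N' = ⊥ → N' = ⊥

/-- `C` is the cosyzygy `Ω⁻¹(M)`: the cokernel of an injective envelope `M → I`. -/
def IsCosyzygyOf (C M : ModuleCat.{u} A) : Prop :=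
  ∃ (I : ModuleCat.{u} A) (j : M →ₗ[A] I) (q : I →ₗ[A] C),
    Module.Injective A I ∧ Function.Injective j ∧ Function.Surjective q ∧
    LinearMap.range j = LinearMap.ker q ∧ EssentialIn A (LinearMap.range j)

/-- `C ≅ Ω⁻ⁿ(M)`. -/
def IsIterCosyzygyOf : ℕ → ModuleCat.{u} A → ModuleCat.{u} A → Prop
  | 0, C, M => Nonempty ((C : Type u) ≃ₗ[A] M)
  | n + 1, C, M => ∃ L, IsIterCosyzygyOf n L M ∧ IsCosyzygyOf A C L

/-! ### Finitely generated injective hulls over an Artin algebra -/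

section Hull

variable {A}

/-- Relative complements: a submodule disjoint from `B` is contained in a maximal one. -/
theorem exists_maximal_disjoint {I : Type u} [AddCommGroup I] [Module A I]
    (B C : Submodule A I) (h : Disjoint C B) :
    ∃ E : Submodule A I, C ≤ E ∧ Disjoint E B ∧ ∀ E', E ≤ E' → Disjoint E' B → E' ≤ E := by
  have hch : ∀ c ⊆ {E : Submodule A I | Disjoint E B}, IsChain (· ≤ ·) c →
      ∀ y ∈ c, ∃ ub ∈ {E : Submodule A I | Disjoint E B}, ∀ z ∈ c, z ≤ ub :=
    fun c hc hch y _ => ⟨sSup c, hch.directedOn.disjoint_sSup_left.mpr fun a ha => hc ha,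
      fun z hz => le_sSup hz⟩
  obtain ⟨E, hCE, hE⟩ := zorn_le_nonempty₀ _ hch C h
  exact ⟨E, hCE, hE.prop, fun E' h1 h2 => hE.le_of_ge h2 h1⟩

theorem injective_of_retract {I E : Type u} [AddCommGroup I] [Module A I] [AddCommGroup E]
    [Module A E] (hI : Module.Injective A I) (i : E →ₗ[A] I) (r : I →ₗ[A] E)
    (h : ∀ x, r (i x) = x) : Module.Injective A E where
  out X Y _ _ _ _ f hf g := by
    obtain ⟨k, hk⟩ := hI.out f hf (i ∘ₗ g)
    exact ⟨r ∘ₗ k, fun x => by simp [hk, h]⟩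

/-- Inside an injective module `I`, every submodule `M` has an injective hull: an injective
submodule `E ≥ M` in which `M` is essential. It is obtained by taking complements twice. -/
theorem exists_hull {I : Type u} [AddCommGroup I] [Module A I] (hI : Module.Injective A I)
    (M : Submodule A I) :
    ∃ E : Submodule A I, M ≤ E ∧ Module.Injective A E ∧
      ∀ L : Submodule A I, L ≤ E → Disjoint L M → L = ⊥ := by
  obtain ⟨N, -, hNM, hNmax⟩ := exists_maximal_disjoint M ⊥ disjoint_bot_left
  obtain ⟨E, hME, hEN, hEmax⟩ := exists_maximal_disjoint N M hNM.symm
  refine ⟨E, hME, ?_, ?_⟩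
  · have hinj : Function.Injective (N.mkQ ∘ₗ E.subtype) := by
      rw [← LinearMap.ker_eq_bot, LinearMap.ker_eq_bot']
      intro x hx
      have : (x : I) ∈ N := by simpa using hx
      exact Subtype.ext (Submodule.disjoint_def.mp hEN _ x.2 this)
    obtain ⟨φ, hφ⟩ := hI.out _ hinj E.subtype
    have hφ' : ∀ x ∈ E, φ (N.mkQ x) = x := fun x hx => hφ ⟨x, hx⟩
    -- The range of `φ` contains `E` and is disjoint from `N`, so it equals `E`.
    have hr : LinearMap.range φ ≤ E := by
      apply hEmax
      · intro x hx
        exact ⟨_, hφ' x hx⟩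
      · have hcom : N.comap (φ ∘ₗ N.mkQ) ≤ N := by
          apply hNmax
          · intro x hx
            have : N.mkQ x = 0 := by simpa using hx
            simp [this]
          · rw [Submodule.disjoint_def]
            intro x hx hxM
            have h1 : φ (N.mkQ x) ∈ N := hx
            rw [hφ' x (hME hxM)] at h1
            exact Submodule.disjoint_def.mp hNM _ h1 hxM
        rw [Submodule.disjoint_def]
        rintro _ ⟨y, rfl⟩ hy
        obtain ⟨x, rfl⟩ := N.mkQ_surjective y
        have hx : x ∈ N := hcom hy
        have : N.mkQ x = 0 := by simpa using hx
        simp [this]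
    refine injective_of_retract hI E.subtype
      (LinearMap.codRestrict E (φ ∘ₗ N.mkQ) fun x => hr ⟨_, rfl⟩) ?_
    intro x
    exact Subtype.ext (hφ' x x.2)
  · intro L hLE hLM
    have hLN : N ⊔ L ≤ N := by
      apply hNmax _ le_sup_left
      rw [Submodule.disjoint_def]
      intro m hm hmM
      obtain ⟨n, hn, l, hl, rfl⟩ := Submodule.mem_sup.mp hm
      have hn0 : n = 0 := by
        refine Submodule.disjoint_def.mp hEN n ?_ hn
        simpa using E.sub_mem (hME hmM) (hLE hl)
      subst hn0
      rw [zero_add] at hmM ⊢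
      exact Submodule.disjoint_def.mp hLM _ hl hmM
    rw [eq_bot_iff]
    intro x hx
    exact Submodule.disjoint_def.mp hEN x (hLE hx) (hLN (Submodule.mem_sup_right hx))

/-- If the Noetherian submodule `M` is essential in `E`, then `Hom(N, E)` is Noetherian for every
`N` of finite length: homomorphisms from a simple module to `E` take values in `M`. -/
theorem isNoetherian_hom (R : Type u) [CommRing R] [Algebra R A] {E : Type u} [AddCommGroup E]
    [Module A E] [Module R E] [IsScalarTower R A E] (M : Submodule A E) [IsNoetherian R M]
    (hess : ∀ L : Submodule A E, Disjoint L M → L = ⊥)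
    {N : Type u} [AddCommGroup N] [Module A N] (hN : IsFiniteLength A N) :
    IsNoetherian R (N →ₗ[A] E) := by
  induction hN with
  | of_subsingleton => infer_instance
  | @of_simple_quotient N _ _ N' hs _ ih =>
    have hsimple : IsNoetherian R ((N ⧸ N') →ₗ[A] E) := by
      have := IsSimpleModule.nontrivial A (N ⧸ N')
      obtain ⟨s, hs0⟩ := exists_ne (0 : N ⧸ N')
      have hM : ∀ (φ : (N ⧸ N') →ₗ[A] E) x, φ x ∈ M := by
        intro φ x
        rcases eq_bot_or_eq_top (M.comap φ) with h | h
        · have hd : LinearMap.range φ = ⊥ := by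
            apply hess
            rw [Submodule.disjoint_def]
            rintro _ ⟨y, rfl⟩ hy
            have : y ∈ M.comap φ := hy
            rw [h, Submodule.mem_bot] at this
            simp [this]
          have : φ x ∈ LinearMap.range φ := ⟨x, rfl⟩
          rw [hd, Submodule.mem_bot] at this
          simp [this]
        · have : x ∈ M.comap φ := by rw [h]; trivial
          exact this
      let ev : ((N ⧸ N') →ₗ[A] E) →ₗ[R] M :=
        { toFun := fun φ => ⟨φ s, hM φ s⟩
          map_add' := fun _ _ => rfl
          map_smul' := fun _ _ => rfl }
      refine isNoetherian_of_injective ev ?_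
      intro φ ψ h
      have hs : φ s = ψ s := congrArg Subtype.val h
      have h0 : s ∈ LinearMap.ker (φ - ψ) := by simp [hs]
      rcases eq_bot_or_eq_top (LinearMap.ker (φ - ψ)) with hk | hk
      · rw [hk] at h0
        exact absurd h0 hs0
      · exact sub_eq_zero.mp (LinearMap.ker_eq_top.mp hk)
    let f : ((N ⧸ N') →ₗ[A] E) →ₗ[R] (N →ₗ[A] E) :=
      { toFun := fun φ => φ ∘ₗ N'.mkQ
        map_add' := fun _ _ => rfl
        map_smul' := fun _ _ => rfl }
    let g : (N →ₗ[A] E) →ₗ[R] (N' →ₗ[A] E) :=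
      { toFun := fun φ => φ ∘ₗ N'.subtype
        map_add' := fun _ _ => rfl
        map_smul' := fun _ _ => rfl }
    refine isNoetherian_of_range_eq_ker f g ?_
    apply le_antisymm
    · rintro _ ⟨φ, rfl⟩
      rw [LinearMap.mem_ker]
      ext x
      have : N'.mkQ x = 0 := by simp
      change φ (N'.mkQ x) = 0
      rw [this, map_zero]
    · intro φ hφ
      have h : N' ≤ LinearMap.ker φ := by
        intro x hx
        exact LinearMap.congr_fun (LinearMap.mem_ker.mp hφ) ⟨x, hx⟩
      exact ⟨N'.liftQ φ h, by ext x; rfl⟩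

/-- Over an Artin algebra every finitely generated module embeds into a finitely generated
injective module. -/
theorem exists_finite_injective (R : Type u) [CommRing R] [IsArtinianRing R]
    [Algebra R A] [Module.Finite R A] (M : ModuleCat.{u} A) [Module.Finite A M] :
    ∃ (E : ModuleCat.{u} A) (j : M →ₗ[A] E), Module.Finite A E ∧ Module.Injective A E ∧
      Function.Injective j := by
  obtain ⟨⟨I, hIinj, f, hf⟩⟩ := EnoughInjectives.presentation M
  have hI : Module.Injective A I := @Module.injective_module_of_injective_object A I _ _ _ hIinj
  have hfi : Function.Injective f.hom := (ModuleCat.mono_iff_injective f).mp hf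
  obtain ⟨E, hME, hE, hess⟩ := exists_hull hI (LinearMap.range f.hom)
  let j : M →ₗ[A] E := LinearMap.codRestrict E f.hom fun x => hME ⟨x, rfl⟩
  have hj : Function.Injective j := fun x y h => hfi (congrArg Subtype.val h)
  let _ : Module R E := Module.compHom E (algebraMap R A)
  have : IsScalarTower R A E := ⟨fun r a x => by
    change (r • a) • x = algebraMap R A r • a • x
    rw [Algebra.smul_def, mul_smul]⟩
  have hA1 : IsNoetherian A A := isNoetherian_of_tower R inferInstance
  have hA2 : IsArtinian A A := isArtinian_of_tower R inferInstance
  have : Module.Finite A (LinearMap.range j) := Module.Finite.range j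
  have : Module.Finite R (LinearMap.range j) := Module.Finite.trans A _
  have hess' : ∀ L : Submodule A E, Disjoint L (LinearMap.range j) → L = ⊥ := by
    intro L hL
    have := hess (L.map E.subtype) (Submodule.map_subtype_le _ _) ?_
    · refine Submodule.map_injective_of_injective E.injective_subtype ?_
      rw [this, Submodule.map_bot]
    · rw [Submodule.disjoint_def]
      rintro _ ⟨x, hx, rfl⟩ ⟨m, hm⟩
      have : x = 0 := Submodule.disjoint_def.mp hL x hx ⟨m, Subtype.ext hm⟩
      simp [this]
  have hH : IsNoetherian R (A →ₗ[A] E) := isNoetherian_hom R (LinearMap.range j) hess'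
    (isFiniteLength_iff_isNoetherian_isArtinian.mpr ⟨hA1, hA2⟩)
  have hER : Module.Finite R E := by
    let ev : (A →ₗ[A] E) →ₗ[R] E :=
      { toFun := fun φ => φ 1
        map_add' := fun _ _ => rfl
        map_smul' := fun _ _ => rfl }
    refine Module.Finite.of_surjective ev fun x => ⟨LinearMap.toSpanSingleton A E x, ?_⟩
    exact one_smul A x
  exact ⟨ModuleCat.of A E, j, Module.Finite.of_restrictScalars_finite R A E, hE, hj⟩

end Hull

/-! ### Additive closures and the classes `[T]ₘ` -/

section Closure

variable {A}

theorem isSummand_refl (M : ModuleCat.{u} A) : IsSummand A M M :=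
  ⟨LinearMap.id, LinearMap.id, rfl⟩

theorem IsSummand.trans {M N L : ModuleCat.{u} A} (h : IsSummand A M N) (h' : IsSummand A N L) :
    IsSummand A M L := by
  obtain ⟨i, r, h⟩ := h
  obtain ⟨i', r', h'⟩ := h'
  refine ⟨i' ∘ₗ i, r ∘ₗ r', ?_⟩
  rw [LinearMap.comp_assoc, ← LinearMap.comp_assoc i i' r', h', LinearMap.id_comp, h]

theorem addClosure_of_summand {T : Set (ModuleCat.{u} A)} {M N : ModuleCat.{u} A}
    (h : IsSummand A M N) (hN : N ∈ addClosure A T) : M ∈ addClosure A T := by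
  obtain ⟨n, f, hf, hs⟩ := hN
  exact ⟨n, f, hf, h.trans hs⟩

theorem mem_addClosure_of_finite {T : Set (ModuleCat.{u} A)} {M : ModuleCat.{u} A}
    {ι : Type} [Finite ι] (f : ι → ModuleCat.{u} A) (hf : ∀ j, f j ∈ T)
    (h : IsSummand A M (ModuleCat.of A (∀ j, (f j : Type u)))) : M ∈ addClosure A T := by
  obtain ⟨n, ⟨e⟩⟩ := Finite.exists_equiv_fin ι
  let E := LinearEquiv.piCongrLeft' A (fun j => (f j : Type u)) e
  refine ⟨n, fun j => f (e.symm j), fun j => hf _, h.trans ⟨E.toLinearMap, E.symm.toLinearMap, ?_⟩⟩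
  ext1 x
  exact E.symm_apply_apply x

theorem subset_addClosure {T : Set (ModuleCat.{u} A)} {M : ModuleCat.{u} A} (h : M ∈ T) :
    M ∈ addClosure A T := by
  refine mem_addClosure_of_finite (ι := Unit) (fun _ => M) (fun _ => h)
    ⟨LinearMap.pi fun _ => LinearMap.id, LinearMap.proj (), rfl⟩

theorem addClosure_idem {T : Set (ModuleCat.{u} A)} {M : ModuleCat.{u} A}
    (h : M ∈ addClosure A (addClosure A T)) : M ∈ addClosure A T := by
  obtain ⟨n, f, hf, i₀, r₀, h₀⟩ := h
  choose k g hg i r hir using hf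
  refine mem_addClosure_of_finite (ι := Σ j : Fin n, Fin (k j)) (fun p => g p.1 p.2)
    (fun p => hg _ _)
    ⟨LinearMap.pi fun p => LinearMap.proj p.2 ∘ₗ i p.1 ∘ₗ LinearMap.proj p.1 ∘ₗ i₀,
     r₀ ∘ₗ LinearMap.pi fun j => r j ∘ₗ LinearMap.pi fun l => LinearMap.proj (⟨j, l⟩ :
      Σ j : Fin n, Fin (k j)), ?_⟩
  ext x
  have : (fun j => r j (i j (i₀ x j))) = i₀ x := by
    funext j
    exact LinearMap.congr_fun (hir j) _
  change r₀ (fun j => r j (i j (i₀ x j))) = x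
  rw [this]
  exact LinearMap.congr_fun h₀ x

theorem addClosure_pi {T : Set (ModuleCat.{u} A)} {n : ℕ} (f : Fin n → ModuleCat.{u} A)
    (hf : ∀ j, f j ∈ addClosure A T) :
    ModuleCat.of A (∀ j, (f j : Type u)) ∈ addClosure A T :=
  addClosure_idem ⟨n, f, hf, isSummand_refl _⟩

theorem addClosure_prod {T : Set (ModuleCat.{u} A)} {M N : ModuleCat.{u} A}
    (hM : M ∈ addClosure A T) (hN : N ∈ addClosure A T) :
    ModuleCat.of A (M × N) ∈ addClosure A T := by
  let f : Fin 2 → ModuleCat.{u} A := ![M, N]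
  refine addClosure_of_summand ?_ (addClosure_pi f ?_)
  · let E := LinearEquiv.piFinTwo A (fun j => (f j : Type u))
    refine ⟨E.symm.toLinearMap, E.toLinearMap, ?_⟩
    exact LinearMap.ext fun x => E.apply_symm_apply x
  · intro j
    fin_cases j
    · exact hM
    · exact hN

theorem zero_mem_addClosure (T : Set (ModuleCat.{u} A)) :
    ModuleCat.of A PUnit ∈ addClosure A T := by
  refine mem_addClosure_of_finite (ι := Empty) (fun j => j.elim) (fun j => j.elim) ⟨0, 0, ?_⟩
  ext x

theorem addClosure_mono {S T : Set (ModuleCat.{u} A)} (h : S ⊆ T) :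
    addClosure A S ⊆ addClosure A T := by
  rintro M ⟨n, f, hf, hs⟩
  exact ⟨n, f, fun j => h (hf j), hs⟩

/-- Each `[T]_{m+1}` is an additive closure, hence stable under finite sums and summands. -/
theorem bracket_succ_eq (T : Set (ModuleCat.{u} A)) (m : ℕ) :
    ∃ S, bracket A T (m + 1) = addClosure A S := by
  cases m with
  | zero => exact ⟨_, rfl⟩
  | succ m => exact ⟨_, rfl⟩

theorem zero_mem_bracket (T : Set (ModuleCat.{u} A)) (m : ℕ) :
    ModuleCat.of A PUnit ∈ bracket A T (m + 1) := by
  obtain ⟨S, hS⟩ := bracket_succ_eq T m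
  rw [hS]
  exact zero_mem_addClosure S

theorem bracket_step {T : Set (ModuleCat.{u} A)} {m : ℕ} {X Y Z : ModuleCat.{u} A}
    (h : SES A X Y Z) (hX : X ∈ addClosure A T) (hZ : Z ∈ bracket A T (m + 1)) :
    Y ∈ bracket A T (m + 2) :=
  subset_addClosure (T := { Y | ∃ C' ∈ addClosure A T, ∃ D' ∈ bracket A T (m + 1), SES A C' Y D' })
    ⟨X, hX, Z, hZ, h⟩

theorem addClosure_subset_bracket {T : Set (ModuleCat.{u} A)} {m : ℕ} {M : ModuleCat.{u} A}
    (h : M ∈ addClosure A T) : M ∈ bracket A T (m + 1) := by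
  cases m with
  | zero => exact h
  | succ m =>
    refine bracket_step (Z := ModuleCat.of A PUnit) ⟨LinearMap.id, 0, Function.injective_id, ?_, ?_⟩
      h (zero_mem_bracket T m)
    · intro x
      exact ⟨0, rfl⟩
    · rw [LinearMap.range_id, LinearMap.ker_zero]

end Closure

/-! ### Cosyzygies of modules in `[T]ₘ` -/

section Cosyzygy

variable {A}

/-- `K` has a cosyzygy in `C`: there is an exact sequence `0 → K → I → L → 0` with `I ∈ J`
injective and `L ∈ C`. Minimality of the embedding is not required. -/
def HasCosyzygy (J C : Set (ModuleCat.{u} A)) (K : ModuleCat.{u} A) : Prop :=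
  ∃ I ∈ J, ∃ L ∈ C, Module.Injective A I ∧ SES A K I L

theorem exists_factor {X Y Z : Type u} [AddCommGroup X] [Module A X] [AddCommGroup Y] [Module A Y]
    [AddCommGroup Z] [Module A Z] (q : X →ₗ[A] Y) (hq : Function.Surjective q) (φ : X →ₗ[A] Z)
    (h : ∀ x, q x = 0 → φ x = 0) : ∃ ψ : Y →ₗ[A] Z, ∀ x, ψ (q x) = φ x := by
  refine ⟨(LinearMap.ker q).liftQ φ (fun x hx => h x hx) ∘ₗ
    (q.quotKerEquivOfSurjective hq).symm.toLinearMap, fun x => ?_⟩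
  have : (q.quotKerEquivOfSurjective hq).symm (q x) = (LinearMap.ker q).mkQ x := by
    rw [LinearEquiv.symm_apply_eq]
    rfl
  rw [LinearMap.comp_apply, LinearEquiv.coe_coe, this]
  rfl

theorem ses_apply {X Y Z : Type u} [AddCommGroup X] [Module A X] [AddCommGroup Y] [Module A Y]
    [AddCommGroup Z] [Module A Z] {f : X →ₗ[A] Y} {g : Y →ₗ[A] Z}
    (h : LinearMap.range f = LinearMap.ker g) (x : X) : g (f x) = 0 := by
  have : f x ∈ LinearMap.ker g := h ▸ ⟨x, rfl⟩
  exact this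

theorem ses_lift {X Y Z : Type u} [AddCommGroup X] [Module A X] [AddCommGroup Y] [Module A Y]
    [AddCommGroup Z] [Module A Z] {f : X →ₗ[A] Y} {g : Y →ₗ[A] Z}
    (h : LinearMap.range f = LinearMap.ker g) {y : Y} (hy : g y = 0) : ∃ x, f x = y := by
  have : y ∈ LinearMap.range f := h ▸ hy
  exact this

theorem range_eq_ker_of {X Y Z : Type u} [AddCommGroup X] [Module A X] [AddCommGroup Y]
    [Module A Y] [AddCommGroup Z] [Module A Z] {f : X →ₗ[A] Y} {g : Y →ₗ[A] Z}
    (h₁ : ∀ x, g (f x) = 0) (h₂ : ∀ y, g y = 0 → ∃ x, f x = y) :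
    LinearMap.range f = LinearMap.ker g := by
  ext y
  constructor
  · rintro ⟨x, rfl⟩
    exact h₁ x
  · exact h₂ y

/-- For a summand `M` of `K` with `0 → K → I → L → 0`, the composite `M → K → I` has a cokernel
which is a summand of `L ⊕ I`. -/
theorem HasCosyzygy.summand {S S' : Set (ModuleCat.{u} A)} {M K : ModuleCat.{u} A}
    (hS : S' ⊆ addClosure A S)
    (h : HasCosyzygy S' (addClosure A S) K) (hM : IsSummand A M K) :
    HasCosyzygy S' (addClosure A S) M := by
  obtain ⟨I, hI, L, hL, hinj, f, g, hf, hg, hfg⟩ := h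
  obtain ⟨i, r, hir⟩ := hM
  have hir' : ∀ x, r (i x) = x := fun x => LinearMap.congr_fun hir x
  let j : M →ₗ[A] I := f ∘ₗ i
  have hj : Function.Injective j := fun x y h => by
    have := congrArg r (hf h)
    rwa [hir', hir'] at this
  -- `e` extends the idempotent `i ∘ r` of `K` to `I`.
  obtain ⟨e, he⟩ := hinj.out f hf (f ∘ₗ i ∘ₗ r)
  let C : ModuleCat.{u} A := ModuleCat.of A (I ⧸ LinearMap.range j)
  let q : I →ₗ[A] C := (LinearMap.range j).mkQ
  have hq : Function.Surjective q := Submodule.mkQ_surjective _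
  have hqj : LinearMap.range j = LinearMap.ker q := (Submodule.ker_mkQ _).symm
  -- The identity of `C` is `C → L → C`, induced by `e`, plus `C → I → C`, induced by `1 - e`.
  obtain ⟨a, ha⟩ := exists_factor q hq (g : I →ₗ[A] L) (by
    intro x hx
    obtain ⟨m, rfl⟩ := ses_lift hqj hx
    exact ses_apply hfg _)
  obtain ⟨b, hb⟩ := exists_factor g hg (q ∘ₗ e) (by
    intro x hx
    obtain ⟨k, rfl⟩ := ses_lift hfg hx
    rw [LinearMap.comp_apply, he]
    exact ses_apply hqj (r k))
  obtain ⟨c, hc⟩ := exists_factor q hq (LinearMap.id - e) (by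
    intro x hx
    obtain ⟨m, rfl⟩ := ses_lift hqj hx
    have : e (j m) = j m := by
      change e (f (i m)) = f (i m)
      rw [he]
      simp [hir']
    simp [this])
  refine ⟨I, hI, C, ?_, hinj, j, q, hj, hq, hqj⟩
  refine addClosure_of_summand ?_ (addClosure_prod hL (hS hI))
  refine ⟨LinearMap.prod a c, LinearMap.coprod b q, ?_⟩
  refine LinearMap.ext fun y => ?_
  obtain ⟨x, rfl⟩ := hq y
  change b (a (q x)) + q (c (q x)) = q x
  rw [ha, hb, hc]
  simp

theorem HasCosyzygy.pi {S S' : Set (ModuleCat.{u} A)} {n : ℕ} {f : Fin n → ModuleCat.{u} A}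
    (h : ∀ j, HasCosyzygy (addClosure A S') (addClosure A S) (f j)) :
    HasCosyzygy (addClosure A S') (addClosure A S) (ModuleCat.of A (∀ j, (f j : Type u))) := by
  choose I hI L hL hinj i p hi hp hip using h
  refine ⟨_, addClosure_pi I hI, _, addClosure_pi L hL, Module.Injective.pi A _,
    LinearMap.pi fun j => i j ∘ₗ LinearMap.proj j, LinearMap.pi fun j => p j ∘ₗ LinearMap.proj j,
    ?_, ?_, range_eq_ker_of ?_ ?_⟩
  · intro x y h
    funext j
    exact hi j (congrFun h j)
  · intro y
    choose x hx using fun j => hp j (y j)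
    exact ⟨x, funext hx⟩
  · intro x
    funext j
    exact ses_apply (hip j) (x j)
  · intro y hy
    choose x hx using fun j => ses_lift (hip j) (congrFun hy j)
    exact ⟨x, funext hx⟩

/-- The horseshoe lemma for one-step injective coresolutions. -/
theorem HasCosyzygy.extension {T : Set (ModuleCat.{u} A)} {m : ℕ} {X Y Z : ModuleCat.{u} A}
    (h : SES A X Y Z) (hX : HasCosyzygy (addClosure A T) (addClosure A T) X)
    (hZ : HasCosyzygy (addClosure A T) (bracket A T (m + 1)) Z) :
    HasCosyzygy (addClosure A T) (bracket A T (m + 2)) Y := by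
  obtain ⟨f, g, hf, hg, hfg⟩ := h
  obtain ⟨I₁, hI₁, L₁, hL₁, hinj₁, j₁, q₁, hj₁, hq₁, hjq₁⟩ := hX
  obtain ⟨I₂, hI₂, L₂, hL₂, hinj₂, j₂, q₂, hj₂, hq₂, hjq₂⟩ := hZ
  obtain ⟨k, hk⟩ := hinj₁.out f hf j₁
  let I : ModuleCat.{u} A := ModuleCat.of A (I₁ × I₂)
  have hinj : Module.Injective A I := ⟨fun U V _ _ _ _ a ha b => by
    obtain ⟨b₁, hb₁⟩ := hinj₁.out a ha (LinearMap.fst A I₁ I₂ ∘ₗ b)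
    obtain ⟨b₂, hb₂⟩ := hinj₂.out a ha (LinearMap.snd A I₁ I₂ ∘ₗ b)
    exact ⟨LinearMap.prod b₁ b₂, fun x => Prod.ext (hb₁ x) (hb₂ x)⟩⟩
  let j : Y →ₗ[A] I := LinearMap.prod k (j₂ ∘ₗ g)
  have hj : Function.Injective j := by
    rw [injective_iff_map_eq_zero]
    intro y hy
    have h1 : k y = 0 := congrArg Prod.fst hy
    have h2 : j₂ (g y) = 0 := congrArg Prod.snd hy
    obtain ⟨x, rfl⟩ := ses_lift hfg ((map_eq_zero_iff j₂ hj₂).mp h2)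
    rw [hk] at h1
    rw [(map_eq_zero_iff j₁ hj₁).mp h1, map_zero]
  let L : ModuleCat.{u} A := ModuleCat.of A (I ⧸ LinearMap.range j)
  let q : I →ₗ[A] L := (LinearMap.range j).mkQ
  have hq : Function.Surjective q := Submodule.mkQ_surjective _
  have hqj : LinearMap.range j = LinearMap.ker q := (Submodule.ker_mkQ _).symm
  obtain ⟨a, ha⟩ := exists_factor q₁ hq₁ (q ∘ₗ LinearMap.inl A I₁ I₂) (by
    intro y hy
    obtain ⟨x, rfl⟩ := ses_lift hjq₁ hy
    have : (LinearMap.inl A I₁ I₂ (j₁ x) : I) = j (f x) :=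
      Prod.ext (hk x).symm (by
        change 0 = j₂ (g (f x))
        rw [ses_apply hfg, map_zero])
    rw [LinearMap.comp_apply, this]
    exact ses_apply hqj _)
  obtain ⟨b, hb⟩ := exists_factor q hq (q₂ ∘ₗ LinearMap.snd A I₁ I₂) (by
    intro y hy
    obtain ⟨x, rfl⟩ := ses_lift hqj hy
    exact ses_apply hjq₂ (g x))
  refine ⟨I, addClosure_prod hI₁ hI₂, L, bracket_step ⟨a, b, ?_, ?_, range_eq_ker_of ?_ ?_⟩ hL₁ hL₂,
    hinj, j, q, hj, hq, hqj⟩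
  · rw [injective_iff_map_eq_zero]
    intro z hz
    obtain ⟨y, rfl⟩ := hq₁ z
    rw [ha] at hz
    obtain ⟨x, hx⟩ := ses_lift hqj hz
    have h1 : k x = y := congrArg Prod.fst hx
    have h2 : j₂ (g x) = 0 := congrArg Prod.snd hx
    obtain ⟨x, rfl⟩ := ses_lift hfg ((map_eq_zero_iff j₂ hj₂).mp h2)
    rw [← h1, hk]
    exact ses_apply hjq₁ x
  · intro z
    obtain ⟨y, rfl⟩ := hq₂ z
    exact ⟨q (0, y), hb _⟩
  · intro z
    obtain ⟨y, rfl⟩ := hq₁ z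
    rw [ha, LinearMap.comp_apply, hb]
    exact map_zero q₂
  · intro z hz
    obtain ⟨⟨y₁, y₂⟩, rfl⟩ := hq z
    rw [hb] at hz
    obtain ⟨x, hx⟩ := ses_lift hjq₂ (y := y₂) hz
    obtain ⟨y, rfl⟩ := hg x
    refine ⟨q₁ (y₁ - k y), ?_⟩
    rw [ha, LinearMap.comp_apply, ← sub_eq_zero, ← map_sub]
    have : (LinearMap.inl A I₁ I₂ (y₁ - k y) : I) - (y₁, y₂) = j (-y) := by
      refine Prod.ext ?_ ?_
      · change (y₁ - k y) - y₁ = k (-y)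
        rw [map_neg]
        abel
      · change 0 - y₂ = j₂ (g (-y))
        rw [← hx, map_neg, map_neg, zero_sub]
    rw [this]
    exact ses_apply hqj _

/-- If `T` has a cosyzygy in `add U`, then every module in `[T]_{m+1}` has one in `[U]_{m+1}`. -/
theorem hasCosyzygy_bracket {T U : Set (ModuleCat.{u} A)}
    (h : ∀ M ∈ T, HasCosyzygy (addClosure A U) (addClosure A U) M) (m : ℕ) :
    ∀ K ∈ bracket A T (m + 1), HasCosyzygy (addClosure A U) (bracket A U (m + 1)) K := by
  have hadd : ∀ K ∈ addClosure A T, HasCosyzygy (addClosure A U) (addClosure A U) K := by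
    rintro K ⟨n, f, hf, hs⟩
    exact (HasCosyzygy.pi fun j => h _ (hf j)).summand subset_rfl hs
  induction m with
  | zero => exact hadd
  | succ m ih =>
    rintro K ⟨n, f, hf, hs⟩
    obtain ⟨S, hS⟩ := bracket_succ_eq U (m + 1)
    have hsub : addClosure A U ⊆ addClosure A S := fun M hM =>
      hS ▸ addClosure_subset_bracket (m := m + 1) hM
    have hf' : ∀ j, HasCosyzygy (addClosure A U) (addClosure A S) (f j) := by
      intro j
      obtain ⟨X, hX, Z, hZ, hXZ⟩ := hf j
      rw [← hS]
      exact HasCosyzygy.extension hXZ (hadd X hX) (ih Z hZ)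
    rw [hS]
    exact (HasCosyzygy.pi hf').summand hsub hs

/-- If `0 → K → P → X → 0` and `0 → K → I → L → 0` are exact with `I` injective, the pushout yields
an exact sequence `0 → P → I ⊕ X → L → 0`, and `X` is a summand of the middle term. -/
theorem mem_bracket_of_cosyzygy {U : Set (ModuleCat.{u} A)} {m : ℕ} {K P X : ModuleCat.{u} A}
    (h : SES A K P X) (hP : P ∈ addClosure A U)
    (hK : HasCosyzygy (addClosure A U) (bracket A U (m + 1)) K) :
    X ∈ bracket A U (m + 2) := by
  obtain ⟨f, g, hf, hg, hfg⟩ := h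
  obtain ⟨I, hI, L, hL, hinj, j, q, hj, hq, hjq⟩ := hK
  obtain ⟨k, hk⟩ := hinj.out f hf j
  obtain ⟨s, hs⟩ := exists_factor g hg (q ∘ₗ k) (by
    intro p hp
    obtain ⟨x, rfl⟩ := ses_lift hfg hp
    rw [LinearMap.comp_apply, hk]
    exact ses_apply hjq x)
  have key : ModuleCat.of A (I × X) ∈ bracket A U (m + 2) := by
    refine bracket_step (X := P) (Z := L)
      ⟨LinearMap.prod k g, LinearMap.coprod q (-s), ?_, ?_, range_eq_ker_of ?_ ?_⟩ hP hL
    · rw [injective_iff_map_eq_zero]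
      intro p hp
      have h1 : k p = 0 := congrArg Prod.fst hp
      have h2 : g p = 0 := congrArg Prod.snd hp
      obtain ⟨x, rfl⟩ := ses_lift hfg h2
      rw [hk] at h1
      rw [(map_eq_zero_iff j hj).mp h1, map_zero]
    · intro l
      obtain ⟨y, rfl⟩ := hq l
      exact ⟨(y, 0), by simp⟩
    · intro p
      change q (k p) + -(s (g p)) = 0
      rw [hs, LinearMap.comp_apply, add_neg_cancel]
    · rintro ⟨y, x⟩ hyx
      change q y + -(s x) = 0 at hyx
      obtain ⟨p, rfl⟩ := hg x
      rw [hs, LinearMap.comp_apply, ← sub_eq_add_neg, ← map_sub] at hyx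
      obtain ⟨z, hz⟩ := ses_lift hjq hyx
      refine ⟨p + f z, Prod.ext ?_ ?_⟩
      · change k (p + f z) = y
        rw [map_add, hk, hz]
        abel
      · change g (p + f z) = g p
        rw [map_add, ses_apply hfg, add_zero]
  obtain ⟨S, hS⟩ := bracket_succ_eq U (m + 1)
  rw [hS] at key ⊢
  refine addClosure_of_summand ⟨LinearMap.inr A I X, LinearMap.snd A I X, ?_⟩ key
  ext x
  rfl

end Cosyzygy

/-! ### Extension dimension of syzygy categories -/

section Dimension

variable {A}

/-- The first syzygy of a module in `Ωⁱ(A-mod)` lies in `Ωⁱ⁺¹(A-mod)`. -/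
theorem exists_syzygy [IsNoetherianRing A] {i : ℕ} {X : ModuleCat.{u} A} (hX : X ∈ SyzCat A i) :
    ∃ K ∈ SyzCat A (i + 1), ∃ n : ℕ, SES A K (ModuleCat.of A (Fin n → A)) X := by
  obtain ⟨hXf, Ks, P, h0, hKs, hP, hses⟩ := hX
  obtain ⟨n, p, hp⟩ := Module.Finite.exists_fin' A X
  let F : ModuleCat.{u} A := ModuleCat.of A (Fin n → A)
  let K : ModuleCat.{u} A := ModuleCat.of A (LinearMap.ker p)
  have hK : Module.Finite A K := inferInstanceAs (Module.Finite A (LinearMap.ker p))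
  have hF : Module.Finite A F ∧ Module.Projective A F :=
    ⟨inferInstanceAs (Module.Finite A (Fin n → A)),
      inferInstanceAs (Module.Projective A (Fin n → A))⟩
  have hs : SES A K F X :=
    ⟨(LinearMap.ker p).subtype, p, Subtype.val_injective, hp, Submodule.range_subtype _⟩
  refine ⟨K, ⟨hK, Fin.cons (α := fun _ => ModuleCat.{u} A) K Ks,
    Fin.cons (α := fun _ => ModuleCat.{u} A) F P, rfl, ?_, ?_, ?_⟩, n, hs⟩
  · exact Fin.cases hK hKs
  · exact Fin.cases hF hP
  · refine Fin.cases ?_ ?_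
    · subst h0
      exact hs
    · exact hses

theorem ed_le {C : Set (ModuleCat.{u} A)} {m : ℕ} (T : ModuleCat.{u} A) (hT : Module.Finite A T)
    (h : C ⊆ bracket A {T} (m + 1)) : ed A C ≤ m :=
  sInf_le ⟨m, rfl, T, hT, h⟩

theorem exists_of_ed_ne_top {C : Set (ModuleCat.{u} A)} (h : ed A C ≠ ⊤) :
    ∃ m : ℕ, ed A C = m ∧ ∃ T : ModuleCat.{u} A, Module.Finite A T ∧ C ⊆ bracket A {T} (m + 1) := by
  have hne : { n : ℕ∞ | ∃ m : ℕ, n = (m : ℕ∞) ∧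
      ∃ T : ModuleCat.{u} A, Module.Finite A T ∧ C ⊆ bracket A {T} (m + 1) }.Nonempty := by
    by_contra hne
    rw [Set.not_nonempty_iff_eq_empty] at hne
    exact h (by rw [ed, hne, sInf_empty])
  exact csInf_mem hne

theorem bracket_mono {S T : Set (ModuleCat.{u} A)} (h : S ⊆ addClosure A T) (m : ℕ) :
    bracket A S (m + 1) ⊆ bracket A T (m + 1) := by
  have h1 : addClosure A S ⊆ addClosure A T := fun M hM => addClosure_idem (addClosure_mono h hM)
  induction m with
  | zero => exact h1
  | succ m ih =>
    refine addClosure_mono ?_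
    rintro X ⟨C, hC, D, hD, hX⟩
    exact ⟨C, h1 hC, D, ih hD, hX⟩

/-- Passing to syzygies lowers the extension dimension by at most one. -/
theorem ed_syzCat_le (R : Type u) [CommRing R] [IsArtinianRing R]
    [Algebra R A] [Module.Finite R A] (i : ℕ) :
    ed A (SyzCat A i) ≤ ed A (SyzCat A (i + 1)) + 1 := by
  have hA : IsNoetherianRing A := isNoetherian_of_tower R inferInstance
  by_cases htop : ed A (SyzCat A (i + 1)) = ⊤
  · simp [htop]
  obtain ⟨m, hm, T, hT, hsub⟩ := exists_of_ed_ne_top htop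
  obtain ⟨I, j, hI, hinj, hj⟩ := exists_finite_injective R T
  let L : ModuleCat.{u} A := ModuleCat.of A (I ⧸ LinearMap.range j)
  let U : ModuleCat.{u} A := ModuleCat.of A (A × I × L)
  have hL : Module.Finite A L := inferInstanceAs (Module.Finite A (I ⧸ LinearMap.range j))
  have hU : Module.Finite A U := inferInstanceAs (Module.Finite A (A × I × L))
  have hUU : U ∈ addClosure A {U} := subset_addClosure rfl
  have hAU : ModuleCat.of A A ∈ addClosure A {U} :=
    addClosure_of_summand ⟨LinearMap.inl A A (I × L), LinearMap.fst A A (I × L), rfl⟩ hUU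
  have hIU : I ∈ addClosure A {U} :=
    addClosure_of_summand ⟨LinearMap.inr A A (I × L) ∘ₗ LinearMap.inl A I L,
      LinearMap.fst A I L ∘ₗ LinearMap.snd A A (I × L), rfl⟩ hUU
  have hLU : L ∈ addClosure A {U} :=
    addClosure_of_summand ⟨LinearMap.inr A A (I × L) ∘ₗ LinearMap.inr A I L,
      LinearMap.snd A I L ∘ₗ LinearMap.snd A A (I × L), rfl⟩ hUU
  have hTU : ∀ M ∈ ({T} : Set (ModuleCat.{u} A)),
      HasCosyzygy (addClosure A {U}) (addClosure A {U}) M := by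
    rintro _ rfl
    exact ⟨I, hIU, L, hLU, hinj, j, (LinearMap.range j).mkQ, hj, Submodule.mkQ_surjective _,
      (Submodule.ker_mkQ _).symm⟩
  rw [hm]
  refine (ed_le (m := m + 1) U hU fun X hX => ?_).trans (by push_cast; exact le_rfl)
  obtain ⟨K, hK, n, hs⟩ := exists_syzygy hX
  exact mem_bracket_of_cosyzygy hs (addClosure_pi (fun _ : Fin n => ModuleCat.of A A) fun _ => hAU)
    (hasCosyzygy_bracket hTU m K (hsub hK))

theorem ed_syzCat_le_add (R : Type u) [CommRing R] [IsArtinianRing R]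
    [Algebra R A] [Module.Finite R A] (i k : ℕ) :
    ed A (SyzCat A i) ≤ ed A (SyzCat A (i + k)) + k := by
  induction k with
  | zero => simp
  | succ k ih =>
    calc ed A (SyzCat A i) ≤ ed A (SyzCat A (i + k)) + k := ih
      _ ≤ ed A (SyzCat A (i + k + 1)) + 1 + k := by gcongr; exact ed_syzCat_le R (i + k)
      _ = ed A (SyzCat A (i + (k + 1))) + (k + 1 : ℕ) := by
        push_cast
        rw [add_assoc, add_comm (1 : ℕ∞), add_assoc i k 1]

end Dimension

/-- Theorem 2.20: if the Artin algebra `A` is `n`-syzygy finite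
(equivalently `ed Ωⁿ(A-mod) = 0`) and `ed(A) = ed (A-mod) = n`, then
`ed Ωⁱ(A-mod) = n - i` for every `0 ≤ i ≤ n`. -/
theorem stmt11 (R : Type u) [CommRing R] [IsArtinianRing R]
    [Algebra R A] [Module.Finite R A]
    (n : ℕ) (hsyz : ed A (SyzCat A n) = 0) (hed : ed A (SyzCat A 0) = (n : ℕ∞)) :
    ∀ i : ℕ, i ≤ n → ed A (SyzCat A i) = ((n - i : ℕ) : ℕ∞) := by
  intro i hi
  apply le_antisymm
  · have h := ed_syzCat_le_add (A := A) R i (n - i)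
    rwa [Nat.add_sub_cancel' hi, hsyz, zero_add] at h
  · have h := ed_syzCat_le_add (A := A) R 0 i
    rw [hed, zero_add] at h
    rw [ENat.natCast_sub]
    exact tsub_le_iff_right.mpr h

end Paper
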